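/- For every weighted game v on n ≤ 3 voters that has at least one voter who is not a dummy, the normalized Banzhaf power vector (β_1,…,β_n), where β_i = η_i / Σ_{j=1}^n η_j and η_i = #{S ⊆ N∖{i} : v(S ∪ {i}) = 1 and v(S) = 0}, is feasible for v. -/

import Mathlib

/-!
Let `S` be winning and `T` losing. It suffices that the Banzhaf counts over `S` have a larger sum
than those over `T`: the least such sum over a winning coalition is then a quota, and dividing by
the total changes nothing. If `T ⊆ S`, adding the voters of `S \ T` to `T` one by one meets a
swing. Otherwise, with at most three voters, one of the following holds.

* `S = C ∪ {a}` and `T = C ∪ {b}`. Then `a` outweighs `b`, so exchanging `b` with `a` maps swings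
  of `b` to swings of `a`. It fixes `C`, a swing of `a` but not of `b`, so `a` has more swings.
* `S = {a}` and `T = Sᶜ`. Then `a` is a dictator and nobody else has a swing.
* `T = {c}` and `S = Tᶜ`. Every swing of `c` is a singleton `{i}`, and then `{c}` is a swing of `i`.
  Besides these, some voter other than `c` has a swing inside `{c}ᶜ`.
-/

open Finset

/-- A (monotonic) simple game on `n` voters. -/
def IsSimpleGame {n : ℕ} (v : Finset (Fin n) → Bool) : Prop :=
  v ∅ = false ∧ v Finset.univ = true ∧
    ∀ S T : Finset (Fin n), S ⊆ T → v S = true → v T = true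

/-- `(q; w)` is a representation of the game `v`. -/
def IsRepresentation {n : ℕ} (v : Finset (Fin n) → Bool) (q : ℝ) (w : Fin n → ℝ) : Prop :=
  (∀ i, 0 ≤ w i) ∧ 0 < q ∧ ∀ S : Finset (Fin n), (q ≤ ∑ i ∈ S, w i ↔ v S = true)

/-- `v` is a weighted game. -/
def IsWeighted {n : ℕ} (v : Finset (Fin n) → Bool) : Prop :=
  ∃ (q : ℝ) (w : Fin n → ℝ), IsRepresentation v q w


/-- Voter `i` is a dummy of `v`. -/
def IsDummy {n : ℕ} (v : Finset (Fin n) → Bool) (i : Fin n) : Prop :=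
  ∀ S : Finset (Fin n), i ∉ S → v (insert i S) = v S

/-- The Banzhaf count of voter `i`: the number of coalitions not containing `i`
to which `i` is critical. -/
def banzhafCount {n : ℕ} (v : Finset (Fin n) → Bool) (i : Fin n) : ℕ :=
  ((Finset.univ.erase i).powerset.filter
    (fun S => v (insert i S) = true ∧ v S = false)).card

section Representation

variable {n : ℕ} {v : Finset (Fin n) → Bool} {q : ℝ} {w : Fin n → ℝ}

lemma exists_isRepresentation_of_sum_lt_sum (h_empty : v ∅ = false) (h_univ : v univ = true)
    (hw : ∀ i, 0 ≤ w i)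
    (hlt : ∀ S T, v S = true → v T = false → ∑ i ∈ T, w i < ∑ i ∈ S, w i) :
    ∃ q, IsRepresentation v q w := by
  obtain ⟨W, hW, hmin⟩ := exists_min_image {S | v S = true} (fun S ↦ ∑ i ∈ S, w i)
    ⟨univ, by simpa using h_univ⟩
  simp only [mem_filter_univ] at hW hmin
  refine ⟨∑ i ∈ W, w i, hw, by simpa using hlt W ∅ hW h_empty, fun S ↦ ⟨fun hle ↦ ?_, hmin S⟩⟩
  by_contra hS
  exact (hlt W S hW (by simpa using hS)).not_ge hle

namespace IsRepresentation

lemma div (h : IsRepresentation v q w) {c : ℝ} (hc : 0 < c) :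
    IsRepresentation v (q / c) fun i ↦ w i / c := by
  refine ⟨fun i ↦ div_nonneg (h.1 i) hc.le, div_pos h.2.1 hc, fun S ↦ ?_⟩
  rw [← sum_div, div_le_div_iff_of_pos_right hc, h.2.2]

lemma sum_pos_of_eq_true (h : IsRepresentation v q w) {S : Finset (Fin n)} (hS : v S = true) :
    0 < ∑ i ∈ S, w i :=
  h.2.1.trans_le ((h.2.2 S).2 hS)

lemma sum_lt_sum (h : IsRepresentation v q w) {S T : Finset (Fin n)}
    (hS : v S = true) (hT : v T = false) : ∑ i ∈ T, w i < ∑ i ∈ S, w i :=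
  (lt_of_not_ge fun hle ↦ by simp [(h.2.2 T).1 hle] at hT).trans_le ((h.2.2 S).2 hS)

end IsRepresentation

end Representation

section Swings

variable {n : ℕ} {v : Finset (Fin n) → Bool} {i c : Fin n} {S T : Finset (Fin n)}

/-- The swings of voter `i`: the losing coalitions, not containing `i`, which `i` turns into
winning ones by joining. The Banzhaf count of `i` is their number. -/
def swings (v : Finset (Fin n) → Bool) (i : Fin n) : Finset (Finset (Fin n)) :=
  {S | i ∉ S ∧ v (insert i S) = true ∧ v S = false}

lemma mem_swings : S ∈ swings v i ↔ i ∉ S ∧ v (insert i S) = true ∧ v S = false := by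
  simp [swings]

lemma card_swings (v : Finset (Fin n) → Bool) (i : Fin n) : #(swings v i) = banzhafCount v i := by
  unfold banzhafCount
  congr 1
  ext S
  simp [mem_swings, subset_erase]

lemma banzhafCount_pos_of_mem_swings (h : S ∈ swings v i) : 0 < banzhafCount v i :=
  card_swings v i ▸ card_pos.2 ⟨S, h⟩

lemma exists_mem_swings_of_subset (hTS : T ⊆ S) (hS : v S = true) (hT : v T = false) :
    ∃ i ∈ S \ T, ∃ U ⊆ S, U ∈ swings v i := by
  rw [← union_sdiff_of_subset hTS] at hS
  suffices ∀ A : Finset (Fin n), v (T ∪ A) = true → ∃ i ∈ A \ T, ∃ U ⊆ T ∪ A, U ∈ swings v i by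
    simpa [union_eq_right.2 hTS] using this _ hS
  intro A
  induction A using Finset.induction_on with
  | empty => simp [hT]
  | insert a A _ ih =>
    intro hA
    rw [union_insert] at hA ⊢
    cases hTA : v (T ∪ A) with
    | true =>
      obtain ⟨i, hi, U, hU, hswing⟩ := ih hTA
      exact ⟨i, sdiff_subset_sdiff (subset_insert a A) subset_rfl hi, U,
        hU.trans (subset_insert _ _), hswing⟩
    | false =>
      have ha : a ∉ T ∪ A := fun ha ↦ by simp [insert_eq_of_mem ha, hTA] at hA
      exact ⟨a, by grind, T ∪ A, subset_insert _ _, mem_swings.2 ⟨ha, hA, hTA⟩⟩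

lemma sum_banzhafCount_lt_of_subset (hTS : T ⊆ S) (hS : v S = true) (hT : v T = false) :
    ∑ i ∈ T, banzhafCount v i < ∑ i ∈ S, banzhafCount v i := by
  obtain ⟨i, hi, U, -, hU⟩ := exists_mem_swings_of_subset hTS hS hT
  rw [mem_sdiff] at hi
  exact sum_lt_sum_of_subset hTS hi.1 hi.2 (banzhafCount_pos_of_mem_swings hU) (by simp)

lemma exists_eq_singleton_of_mem_swings (hn : n ≤ 3) (hwin : v {c}ᶜ = true)
    (hlose : v {c} = false) (hS : S ∈ swings v c) : ∃ i, {c} ∈ swings v i ∧ S = {i} := by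
  obtain ⟨hc, hSc, hS⟩ := mem_swings.1 hS
  have hne : S ≠ ∅ := by
    rintro rfl
    simp_all
  have hss : S ⊂ {c}ᶜ := by
    refine LE.le.ssubset_of_ne (by simpa using hc) ?_
    rintro rfl
    simp_all
  have hcard : #S = 1 := by
    have := card_lt_card hss
    rw [card_compl, Fintype.card_fin, card_singleton] at this
    have := card_pos.2 (nonempty_iff_ne_empty.2 hne)
    omega
  obtain ⟨i, rfl⟩ := card_eq_one.1 hcard
  exact ⟨i, mem_swings.2 ⟨by grind, pair_comm c i ▸ hSc, hlose⟩, rfl⟩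

lemma card_filter_singleton_mem_swings_lt_sum (h_empty : v ∅ = false) (hwin : v {c}ᶜ = true) :
    #{i | {c} ∈ swings v i} < ∑ i ∈ {c}ᶜ, banzhafCount v i := by
  obtain ⟨j, hj, U, hUc, hU⟩ := exists_mem_swings_of_subset (empty_subset _) hwin h_empty
  have hcard : #{i | {c} ∈ swings v i} = ∑ i ∈ {c}ᶜ, if {c} ∈ swings v i then 1 else 0 := by
    rw [card_filter]
    refine (sum_subset (subset_univ _) fun i _ hi ↦ if_neg fun hmem ↦ ?_).symm
    exact (mem_swings.1 hmem).1 (by simpa using hi)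
  rw [hcard]
  refine sum_lt_sum (fun i _ ↦ ?_) ⟨j, by simpa using hj, ?_⟩
  · split_ifs with hi
    · exact banzhafCount_pos_of_mem_swings hi
    · exact zero_le
  · split_ifs with hjc
    · have hne : {c} ≠ U := by
        rintro rfl
        simp at hUc
      exact card_swings v j ▸ one_lt_card.2 ⟨{c}, hjc, U, hU, hne⟩
    · exact banzhafCount_pos_of_mem_swings hU

lemma banzhafCount_lt_sum_compl_singleton (hn : n ≤ 3) (h_empty : v ∅ = false)
    (hwin : v {c}ᶜ = true) (hlose : v {c} = false) :
    banzhafCount v c < ∑ i ∈ {c}ᶜ, banzhafCount v i := by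
  refine LE.le.trans_lt ?_ (card_filter_singleton_mem_swings_lt_sum h_empty hwin)
  rw [← card_swings]
  refine (card_le_card (t := image ({·}) {i | {c} ∈ swings v i}) fun S hS ↦ ?_).trans
    card_image_le
  obtain ⟨i, hi, rfl⟩ := exists_eq_singleton_of_mem_swings hn hwin hlose hS
  exact mem_image_of_mem _ (by simpa using hi)

end Swings

section Desirability

variable {n : ℕ} {v : Finset (Fin n) → Bool} {a b : Fin n} {S C : Finset (Fin n)}

/-- Isbell's desirability relation: `a` is at least as desirable as `b` in `v` if replacing `b`
by `a` never turns a winning coalition into a losing one. -/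
def AtLeastAsDesirable (v : Finset (Fin n) → Bool) (a b : Fin n) : Prop :=
  ∀ C : Finset (Fin n), a ∉ C → b ∉ C → v (insert b C) = true → v (insert a C) = true

lemma IsRepresentation.atLeastAsDesirable {q : ℝ} {w : Fin n → ℝ} (h : IsRepresentation v q w)
    (hba : w b ≤ w a) : AtLeastAsDesirable v a b := by
  intro C ha hb hwin
  rw [← h.2.2, sum_insert hb] at hwin
  rw [← h.2.2, sum_insert ha]
  linarith

lemma IsRepresentation.atLeastAsDesirable_of_insert {q : ℝ} {w : Fin n → ℝ}
    (h : IsRepresentation v q w) (ha : a ∉ C) (hb : b ∉ C)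
    (hwin : v (insert a C) = true) (hlose : v (insert b C) = false) :
    AtLeastAsDesirable v a b := by
  have hlt := h.sum_lt_sum hwin hlose
  rw [sum_insert ha, sum_insert hb, add_lt_add_iff_right] at hlt
  exact h.atLeastAsDesirable hlt.le

lemma map_swap_eq_self {α : Type*} [DecidableEq α] {a b : α} {S : Finset α} (ha : a ∉ S)
    (hb : b ∉ S) : S.map (Equiv.swap a b).toEmbedding = S := by
  ext i
  rw [mem_map_equiv, Equiv.symm_swap]
  grind

lemma AtLeastAsDesirable.map_swap_mem_swings (h : AtLeastAsDesirable v a b)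
    (hS : S ∈ swings v b) : S.map (Equiv.swap a b).toEmbedding ∈ swings v a := by
  obtain ⟨hb, hwin, hlose⟩ := mem_swings.1 hS
  by_cases ha : a ∈ S
  · obtain ⟨C, haC, rfl⟩ : ∃ C, a ∉ C ∧ insert a C = S := ⟨S.erase a, by simp, insert_erase ha⟩
    obtain ⟨hba, hbC⟩ : b ≠ a ∧ b ∉ C := by simpa using hb
    rw [map_insert, map_swap_eq_self haC hbC, Equiv.coe_toEmbedding, Equiv.swap_apply_left]
    refine mem_swings.2 ⟨by simp [hba.symm, haC], insert_comm a b C ▸ hwin, ?_⟩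
    by_contra hC
    simp [h C haC hbC (by simpa using hC)] at hlose
  · rw [map_swap_eq_self ha hb]
    exact mem_swings.2 ⟨ha, h S ha hb hwin, hlose⟩

lemma AtLeastAsDesirable.banzhafCount_lt (h : AtLeastAsDesirable v a b)
    (hC : C ∈ swings v a) (hb : b ∉ C) (hlose : v (insert b C) = false) :
    banzhafCount v b < banzhafCount v a := by
  rw [← card_swings, ← card_swings, ← card_map (Equiv.swap a b).finsetCongr.toEmbedding]
  refine card_lt_card ((ssubset_iff_of_subset fun S hS ↦ ?_).2 ⟨C, hC, fun hmem ↦ ?_⟩)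
  · obtain ⟨U, hU, rfl⟩ := mem_map.1 hS
    exact h.map_swap_mem_swings hU
  · rw [mem_map_equiv, Equiv.finsetCongr_symm, Equiv.symm_swap, Equiv.finsetCongr_apply,
      map_swap_eq_self (mem_swings.1 hC).1 hb, mem_swings] at hmem
    simp [hmem.2.1] at hlose

end Desirability

namespace IsSimpleGame

variable {n : ℕ} {v : Finset (Fin n) → Bool} {a : Fin n} {S T : Finset (Fin n)}

lemma eq_false_of_subset (hv : IsSimpleGame v) (hST : S ⊆ T) (hT : v T = false) :
    v S = false := by
  by_contra hS
  simp [hv.2.2 S T hST (by simpa using hS)] at hT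

lemma swings_eq_empty_of_ne (hv : IsSimpleGame v) (hwin : v {a} = true) (hlose : v {a}ᶜ = false)
    {i : Fin n} (hi : i ≠ a) : swings v i = ∅ := by
  refine eq_empty_of_forall_notMem fun S hS ↦ ?_
  obtain ⟨-, hSi, hS⟩ := mem_swings.1 hS
  by_cases ha : a ∈ S
  · simp [hv.2.2 {a} S (by simpa using ha) hwin] at hS
  · have hsub : insert i S ⊆ {a}ᶜ := by simp [hi.symm, ha]
    simp [hv.eq_false_of_subset hsub hlose] at hSi

lemma sum_compl_singleton_lt_banzhafCount (hv : IsSimpleGame v) (hwin : v {a} = true)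
    (hlose : v {a}ᶜ = false) : ∑ i ∈ {a}ᶜ, banzhafCount v i < banzhafCount v a := by
  have hpos : 0 < banzhafCount v a :=
    banzhafCount_pos_of_mem_swings (S := ∅) (mem_swings.2 ⟨by simp, by simpa, hv.1⟩)
  rwa [sum_eq_zero fun i hi ↦ ?_]
  rw [← card_swings, hv.swings_eq_empty_of_ne hwin hlose (by simpa using hi), card_empty]

end IsSimpleGame

lemma exists_eq_insert_or_eq_compl_singleton {α : Type*} [Fintype α] [DecidableEq α]
    (hα : Fintype.card α ≤ 3) {S T : Finset α} (hST : ¬ S ⊆ T) (hTS : ¬ T ⊆ S) :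
    (∃ C a b, a ∉ C ∧ b ∉ C ∧ S = insert a C ∧ T = insert b C) ∨
      (∃ a, S = {a} ∧ T = {a}ᶜ) ∨ ∃ c, S = {c}ᶜ ∧ T = {c} := by
  have hS : 0 < #(S \ T) := card_pos.2 (sdiff_nonempty.2 hST)
  have hT : 0 < #(T \ S) := card_pos.2 (sdiff_nonempty.2 hTS)
  have hcard : #(symmDiff S T) = #(S \ T) + #(T \ S) := card_union_of_disjoint disjoint_sdiff_sdiff
  by_cases h_one : #(S \ T) = 1 ∧ #(T \ S) = 1
  · obtain ⟨a, ha⟩ := card_eq_one.1 h_one.1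
    obtain ⟨b, hb⟩ := card_eq_one.1 h_one.2
    have haT : a ∈ S \ T := ha ▸ mem_singleton_self a
    have hbS : b ∈ T \ S := hb ▸ mem_singleton_self b
    refine .inl ⟨S ∩ T, a, b, fun h ↦ (mem_sdiff.1 haT).2 (mem_inter.1 h).2,
      fun h ↦ (mem_sdiff.1 hbS).2 (mem_inter.1 h).1, ?_, ?_⟩
    · rw [insert_eq, ← ha, sdiff_union_inter]
    · rw [insert_eq, ← hb, inter_comm, sdiff_union_inter]
  · have htop : symmDiff S T = univ := by
      rw [← card_eq_iff_eq_univ]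
      have := card_le_univ (symmDiff S T)
      omega
    have hcompl : IsCompl S T := (symmDiff_eq_top S T).1 htop
    have h_or : #S = 1 ∨ #T = 1 := by
      simp only [hcompl.disjoint.sdiff_eq_left, hcompl.disjoint.sdiff_eq_right]
        at hS hT hcard h_one
      have := card_le_univ (symmDiff S T)
      omega
    obtain h | h := h_or
    · obtain ⟨a, rfl⟩ := card_eq_one.1 h
      exact .inr (.inl ⟨a, rfl, hcompl.compl_eq.symm⟩)
    · obtain ⟨c, rfl⟩ := card_eq_one.1 h
      exact .inr (.inr ⟨c, hcompl.eq_compl, rfl⟩)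

lemma sum_banzhafCount_lt_of_card_le_three {n : ℕ} (hn : n ≤ 3) {v : Finset (Fin n) → Bool}
    (hv : IsSimpleGame v) (hw : IsWeighted v) {S T : Finset (Fin n)}
    (hS : v S = true) (hT : v T = false) :
    ∑ i ∈ T, banzhafCount v i < ∑ i ∈ S, banzhafCount v i := by
  by_cases hTS : T ⊆ S
  · exact sum_banzhafCount_lt_of_subset hTS hS hT
  have hST : ¬ S ⊆ T := fun hST ↦ by simp [hv.2.2 S T hST hS] at hT
  obtain ⟨C, a, b, ha, hb, rfl, rfl⟩ | ⟨a, rfl, rfl⟩ | ⟨c, rfl, rfl⟩ :=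
    exists_eq_insert_or_eq_compl_singleton (by simpa using hn) hST hTS
  · obtain ⟨q, w, hqw⟩ := hw
    have hswing : C ∈ swings v a :=
      mem_swings.2 ⟨ha, hS, hv.eq_false_of_subset (subset_insert b C) hT⟩
    rw [sum_insert ha, sum_insert hb, add_lt_add_iff_right]
    exact (hqw.atLeastAsDesirable_of_insert ha hb hS hT).banzhafCount_lt hswing hb hT
  · simpa using hv.sum_compl_singleton_lt_banzhafCount hS hT
  · simpa using banzhafCount_lt_sum_compl_singleton hn hv.1 hS hT

/-- For every weighted game on at most three voters having a non-dummy voter,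
the normalized Banzhaf power vector is feasible. -/
theorem banzhaf_feasible_of_card_le_three {n : ℕ} (hn : n ≤ 3)
    (v : Finset (Fin n) → Bool) (hs : IsSimpleGame v) (hw : IsWeighted v)
    (hnd : ∃ i : Fin n, ¬ IsDummy v i) :
    ∃ q : ℝ, IsRepresentation v q
      (fun i => (banzhafCount v i : ℝ) / ∑ j, (banzhafCount v j : ℝ)) := by
  obtain ⟨q, hq⟩ := exists_isRepresentation_of_sum_lt_sum hs.1 hs.2.1
    (fun i ↦ (banzhafCount v i).cast_nonneg (α := ℝ))
    (fun S T hS hT ↦ mod_cast sum_banzhafCount_lt_of_card_le_three hn hs hw hS hT)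
  exact ⟨_, hq.div (hq.sum_pos_of_eq_true hs.2.1)⟩
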